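/- The concrete logic L³₂ (even-cardinality subsets of a 6-element set) admits exactly 6 two-valued states, and this set of two-valued states is full: for any two non-disjoint 2-element subsets x, y of {1,...,6}, there is a two-valued state s with s(x) = s(y) = 1. -/

import Mathlib

/-- Atoms of the concrete logic L³₂: the 2-element subsets of a 6-element set. -/
def L32Atoms : Finset (Finset (Fin 6)) := Finset.univ.powersetCard 2

/-- `b` is a block of L³₂: a maximal pairwise disjoint family of atoms
(i.e. a perfect matching of the 6-element set). -/
def L32IsBlock (b : Finset (Finset (Fin 6))) : Prop :=
  b ⊆ L32Atoms ∧ (∀ x ∈ b, ∀ y ∈ b, x ≠ y → x ∩ y = ∅) ∧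
    ∀ a ∈ L32Atoms, a ∉ b → ¬ (∀ x ∈ b, a ∩ x = ∅)

instance : DecidablePred L32IsBlock := fun b => by
  unfold L32IsBlock
  exact @instDecidableAnd _ _ (by infer_instance)
    (@instDecidableAnd _ _ (by infer_instance) (by infer_instance))

/-- Blocks of L³₂. -/
def L32Blocks : Finset (Finset (Finset (Fin 6))) := Finset.univ.filter L32IsBlock

/-- Two-valued states on L³₂, identified with the set `T` of atoms of value 1:
every block contains exactly one atom of `T`. -/
def L32States : Finset (Finset (Finset (Fin 6))) :=
  L32Atoms.powerset.filter (fun T => ∀ b ∈ L32Blocks, (b.filter (fun a => a ∈ T)).card = 1)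

def L32Star (i : Fin 6) : Finset (Finset (Fin 6)) := L32Atoms.filter (fun x => i ∈ x)

theorem L32_star_mem (i : Fin 6) : L32Star i ∈ L32States := by
  simp only [L32States, Finset.mem_filter, Finset.mem_powerset]
  refine ⟨Finset.filter_subset _ _, ?_⟩
  intro b hb
  have hb' : L32IsBlock b := (Finset.mem_filter.1 hb).2
  obtain ⟨h1, h2, h3⟩ := hb'
  have hex : ∃ x ∈ b, i ∈ x := by
    by_contra hcon
    push Not at hcon
    have hcard : (b.biUnion id).card = b.card * 2 := by
      rw [Finset.card_biUnion]
      · rw [Finset.sum_const_nat]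
        intro x hx
        exact (Finset.mem_powersetCard.1 (h1 hx)).2
      · intro x hx y hy hne
        exact Finset.disjoint_iff_inter_eq_empty.2 (h2 x hx y hy hne)
    have hi : i ∉ b.biUnion id := by
      simpa using hcon
    have hj : ∃ j, j ∉ insert i (b.biUnion id) := by
      by_contra hall
      push Not at hall
      have h := Finset.card_insert_of_notMem hi
      rw [Finset.eq_univ_of_forall hall, hcard] at h
      simp at h
      omega
    obtain ⟨j, hj⟩ := hj
    simp only [Finset.mem_insert, Finset.mem_biUnion, id, not_or, not_exists, not_and] at hj
    refine h3 {i, j} ?_ ?_ ?_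
    · simp [L32Atoms, Finset.mem_powersetCard, Finset.card_pair (Ne.symm hj.1)]
    · intro h
      exact hcon _ h (by simp)
    · intro x hx
      ext k
      simp only [Finset.mem_inter, Finset.mem_insert, Finset.mem_singleton, Finset.notMem_empty,
        iff_false, not_and]
      rintro (rfl | rfl)
      · exact hcon x hx
      · exact hj.2 x hx
  obtain ⟨x, hx, hix⟩ := hex
  rw [Finset.card_eq_one]
  refine ⟨x, ?_⟩
  ext y
  simp only [L32Star, Finset.mem_filter, Finset.mem_singleton]
  constructor
  · rintro ⟨hy, -, hiy⟩
    by_contra hne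
    have h := h2 y hy x hx hne
    have : i ∈ y ∩ x := Finset.mem_inter.2 ⟨hiy, hix⟩
    simp [h] at this
  · rintro rfl
    exact ⟨hx, h1 hx, hix⟩

theorem L32_exactly_one {T : Finset (Finset (Fin 6))} (hT : T ∈ L32States)
    (x y z : Finset (Fin 6)) (hb : L32IsBlock {x, y, z}) (hd : x ≠ y ∧ x ≠ z ∧ y ≠ z) :
    (x ∈ T ∨ y ∈ T ∨ z ∈ T) ∧ ¬ (x ∈ T ∧ y ∈ T) ∧ ¬ (x ∈ T ∧ z ∈ T) ∧ ¬ (y ∈ T ∧ z ∈ T) := by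
  have h := (Finset.mem_filter.1 hT).2 {x, y, z} (Finset.mem_filter.2 ⟨Finset.mem_univ _, hb⟩)
  obtain ⟨hxy, hxz, hyz⟩ := hd
  by_cases hx : x ∈ T <;> by_cases hy : y ∈ T <;> by_cases hz : z ∈ T <;>
    simp_all [Finset.filter_insert, Finset.filter_singleton]

theorem L32_atoms_eq : L32Atoms = {{0, 1}, {0, 2}, {0, 3}, {0, 4}, {0, 5}, {1, 2}, {1, 3}, {1, 4}, {1, 5}, {2, 3}, {2, 4}, {2, 5}, {3, 4}, {3, 5}, {4, 5}} := by decide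

theorem L32_prop (p01 p02 p03 p04 p05 p12 p13 p14 p15 p23 p24 p25 p34 p35 p45 : Prop)
    (h0 : ((p01 ∨ p23 ∨ p45) ∧ ¬ (p01 ∧ p23) ∧ ¬ (p01 ∧ p45) ∧ ¬ (p23 ∧ p45)))
    (h1 : ((p01 ∨ p24 ∨ p35) ∧ ¬ (p01 ∧ p24) ∧ ¬ (p01 ∧ p35) ∧ ¬ (p24 ∧ p35)))
    (h2 : ((p01 ∨ p25 ∨ p34) ∧ ¬ (p01 ∧ p25) ∧ ¬ (p01 ∧ p34) ∧ ¬ (p25 ∧ p34)))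
    (h3 : ((p02 ∨ p13 ∨ p45) ∧ ¬ (p02 ∧ p13) ∧ ¬ (p02 ∧ p45) ∧ ¬ (p13 ∧ p45)))
    (h4 : ((p02 ∨ p14 ∨ p35) ∧ ¬ (p02 ∧ p14) ∧ ¬ (p02 ∧ p35) ∧ ¬ (p14 ∧ p35)))
    (h5 : ((p02 ∨ p15 ∨ p34) ∧ ¬ (p02 ∧ p15) ∧ ¬ (p02 ∧ p34) ∧ ¬ (p15 ∧ p34)))
    (h6 : ((p03 ∨ p12 ∨ p45) ∧ ¬ (p03 ∧ p12) ∧ ¬ (p03 ∧ p45) ∧ ¬ (p12 ∧ p45)))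
    (h7 : ((p03 ∨ p14 ∨ p25) ∧ ¬ (p03 ∧ p14) ∧ ¬ (p03 ∧ p25) ∧ ¬ (p14 ∧ p25)))
    (h8 : ((p03 ∨ p15 ∨ p24) ∧ ¬ (p03 ∧ p15) ∧ ¬ (p03 ∧ p24) ∧ ¬ (p15 ∧ p24)))
    (h9 : ((p04 ∨ p12 ∨ p35) ∧ ¬ (p04 ∧ p12) ∧ ¬ (p04 ∧ p35) ∧ ¬ (p12 ∧ p35)))
    (h10 : ((p04 ∨ p13 ∨ p25) ∧ ¬ (p04 ∧ p13) ∧ ¬ (p04 ∧ p25) ∧ ¬ (p13 ∧ p25)))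
    (h11 : ((p04 ∨ p15 ∨ p23) ∧ ¬ (p04 ∧ p15) ∧ ¬ (p04 ∧ p23) ∧ ¬ (p15 ∧ p23)))
    (h12 : ((p05 ∨ p12 ∨ p34) ∧ ¬ (p05 ∧ p12) ∧ ¬ (p05 ∧ p34) ∧ ¬ (p12 ∧ p34)))
    (h13 : ((p05 ∨ p13 ∨ p24) ∧ ¬ (p05 ∧ p13) ∧ ¬ (p05 ∧ p24) ∧ ¬ (p13 ∧ p24)))
    (h14 : ((p05 ∨ p14 ∨ p23) ∧ ¬ (p05 ∧ p14) ∧ ¬ (p05 ∧ p23) ∧ ¬ (p14 ∧ p23)))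
    : (p01 ∧ p02 ∧ p03 ∧ p04 ∧ p05 ∧ ¬ p12 ∧ ¬ p13 ∧ ¬ p14 ∧ ¬ p15 ∧ ¬ p23 ∧ ¬ p24 ∧ ¬ p25 ∧ ¬ p34 ∧ ¬ p35 ∧ ¬ p45) ∨
      (p01 ∧ ¬ p02 ∧ ¬ p03 ∧ ¬ p04 ∧ ¬ p05 ∧ p12 ∧ p13 ∧ p14 ∧ p15 ∧ ¬ p23 ∧ ¬ p24 ∧ ¬ p25 ∧ ¬ p34 ∧ ¬ p35 ∧ ¬ p45) ∨
      (¬ p01 ∧ p02 ∧ ¬ p03 ∧ ¬ p04 ∧ ¬ p05 ∧ p12 ∧ ¬ p13 ∧ ¬ p14 ∧ ¬ p15 ∧ p23 ∧ p24 ∧ p25 ∧ ¬ p34 ∧ ¬ p35 ∧ ¬ p45) ∨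
      (¬ p01 ∧ ¬ p02 ∧ p03 ∧ ¬ p04 ∧ ¬ p05 ∧ ¬ p12 ∧ p13 ∧ ¬ p14 ∧ ¬ p15 ∧ p23 ∧ ¬ p24 ∧ ¬ p25 ∧ p34 ∧ p35 ∧ ¬ p45) ∨
      (¬ p01 ∧ ¬ p02 ∧ ¬ p03 ∧ p04 ∧ ¬ p05 ∧ ¬ p12 ∧ ¬ p13 ∧ p14 ∧ ¬ p15 ∧ ¬ p23 ∧ p24 ∧ ¬ p25 ∧ p34 ∧ ¬ p35 ∧ p45) ∨
      (¬ p01 ∧ ¬ p02 ∧ ¬ p03 ∧ ¬ p04 ∧ p05 ∧ ¬ p12 ∧ ¬ p13 ∧ ¬ p14 ∧ p15 ∧ ¬ p23 ∧ ¬ p24 ∧ p25 ∧ ¬ p34 ∧ p35 ∧ p45) := by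
  by_cases a : p01 <;> by_cases b : p02 <;> by_cases c : p03 <;> by_cases d : p04 <;>
    by_cases e : p45 <;> grind (splits := 40)

set_option maxRecDepth 10000 in
theorem L32_state_eq_star {T : Finset (Finset (Fin 6))} (hT : T ∈ L32States) :
    ∃ i, T = L32Star i := by
  have hsub : T ⊆ L32Atoms := Finset.mem_powerset.1 (Finset.mem_filter.1 hT).1
  have key : ∀ i, (∀ x ∈ L32Atoms, (x ∈ T ↔ i ∈ x)) → ∃ i, T = L32Star i := by
    intro i h
    refine ⟨i, ?_⟩
    ext x
    simp only [L32Star, Finset.mem_filter]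
    exact ⟨fun hx => ⟨hsub hx, (h x (hsub hx)).1 hx⟩, fun hx => (h x hx.1).2 hx.2⟩
  have hp := L32_prop ({0, 1} ∈ T) ({0, 2} ∈ T) ({0, 3} ∈ T) ({0, 4} ∈ T) ({0, 5} ∈ T) ({1, 2} ∈ T) ({1, 3} ∈ T) ({1, 4} ∈ T) ({1, 5} ∈ T) ({2, 3} ∈ T) ({2, 4} ∈ T) ({2, 5} ∈ T) ({3, 4} ∈ T) ({3, 5} ∈ T) ({4, 5} ∈ T)
    (L32_exactly_one hT {0, 1} {2, 3} {4, 5} (by decide) (by decide))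
    (L32_exactly_one hT {0, 1} {2, 4} {3, 5} (by decide) (by decide))
    (L32_exactly_one hT {0, 1} {2, 5} {3, 4} (by decide) (by decide))
    (L32_exactly_one hT {0, 2} {1, 3} {4, 5} (by decide) (by decide))
    (L32_exactly_one hT {0, 2} {1, 4} {3, 5} (by decide) (by decide))
    (L32_exactly_one hT {0, 2} {1, 5} {3, 4} (by decide) (by decide))
    (L32_exactly_one hT {0, 3} {1, 2} {4, 5} (by decide) (by decide))
    (L32_exactly_one hT {0, 3} {1, 4} {2, 5} (by decide) (by decide))
    (L32_exactly_one hT {0, 3} {1, 5} {2, 4} (by decide) (by decide))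
    (L32_exactly_one hT {0, 4} {1, 2} {3, 5} (by decide) (by decide))
    (L32_exactly_one hT {0, 4} {1, 3} {2, 5} (by decide) (by decide))
    (L32_exactly_one hT {0, 4} {1, 5} {2, 3} (by decide) (by decide))
    (L32_exactly_one hT {0, 5} {1, 2} {3, 4} (by decide) (by decide))
    (L32_exactly_one hT {0, 5} {1, 3} {2, 4} (by decide) (by decide))
    (L32_exactly_one hT {0, 5} {1, 4} {2, 3} (by decide) (by decide))
  rcases hp with h | h | h | h | h | h
  · refine key 0 ?_
    rw [L32_atoms_eq]
    simp [h]
  · refine key 1 ?_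
    rw [L32_atoms_eq]
    simp [h]
  · refine key 2 ?_
    rw [L32_atoms_eq]
    simp [h]
  · refine key 3 ?_
    rw [L32_atoms_eq]
    simp [h]
  · refine key 4 ?_
    rw [L32_atoms_eq]
    simp [h]
  · refine key 5 ?_
    rw [L32_atoms_eq]
    simp [h]

theorem L32_states_eq : L32States = Finset.univ.image L32Star := by
  ext T
  simp only [Finset.mem_image, Finset.mem_univ, true_and]
  constructor
  · intro h
    obtain ⟨i, hi⟩ := L32_state_eq_star h
    exact ⟨i, hi.symm⟩
  · rintro ⟨i, rfl⟩
    exact L32_star_mem i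

/-- L³₂ admits exactly 6 two-valued states, and this set of states is full:
any two non-disjoint atoms are simultaneously given value 1 by some two-valued state. -/
theorem L32_states_card_and_full :
    L32States.card = 6 ∧
    ∀ x ∈ L32Atoms, ∀ y ∈ L32Atoms, (x ∩ y).Nonempty →
      ∃ T ∈ L32States, x ∈ T ∧ y ∈ T := by
  constructor
  · rw [L32_states_eq]
    decide
  · rintro x hx y hy ⟨i, hi⟩
    rw [Finset.mem_inter] at hi
    exact ⟨L32Star i, L32_star_mem i, Finset.mem_filter.2 ⟨hx, hi.1⟩,
      Finset.mem_filter.2 ⟨hy, hi.2⟩⟩
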